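/- For every x ∈ A, each ζ ∈ W_ext with ζ(x) = x can be written as ζ = ω ∘ η with ω ∈ Ω, η ∈ W_aff, ω(x) = x and η(x) = x; consequently the stabilizer of x in W_ext is the internal semidirect product of the stabilizer of x in Ω and the stabilizer of x in W_aff. -/

import Mathlib

/-!
The theorem combines three facts: `W_aff` is normal in `W_ext`, `Ω ∩ W_aff = 1`, and the
stabilizer of `x` in `W_aff` acts transitively on the alcoves that contain `x`.

Normality (`IsRootSystem.conj_mem`) holds because `W` acts trivially on `P^∨ / Q^∨`.

Transitivity (`exists_aff`): let `p` be an interior point of `A` and let `ζ ∈ W_ext` fix `x`. Among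
the finitely many points `η (ζ p)`, with `η ∈ W_aff` fixing `x`, let `q` be one closest to `p`. A
wall through `x` cannot separate `q` from `p`, since reflecting `q` in it would bring it closer. A
wall not through `x` cannot either, since the alcoves of `p` and of `q` both contain `x`. Hence `q`
is interior to `A`, so that `η ∘ ζ` preserves `A` (`image_alcove`). The decomposition of `ζ` comes
from applying this to `ζ⁻¹`.

Triviality of `Ω ∩ W_aff` (`aff_eq_one`), which gives uniqueness: an element `t_γ ∘ w` of it sends
`0` to `γ ∈ A ∩ Q^∨`, and an element of `Q^∨` whose pairings with all roots are at most `1` is zero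
(`IsRootSystem.minuscule_eq_zero`). What remains is `w ∈ W` preserving `A`, hence positivity of
roots, and such a `w` is the identity by the exchange condition (`exchange`, `eq_one_of_pos`).

Positivity of a root `β` is expressed throughout as `0 < (β, ρ)`, where `ρ` is the vector with
`(αᵢ, ρ) = 1` for all `i`, so that `(β, ρ)` is the height of `β`.
-/

open scoped RealInnerProductSpace

open scoped RealInnerProductSpace

/-- The reflection `s_a` in the hyperplane orthogonal to `a`. -/
noncomputable def reflMap {V : Type*} [NormedAddCommGroup V] [InnerProductSpace ℝ V]
    (a x : V) : V :=
  x - (2 * ⟪a, x⟫ / ⟪a, a⟫) • a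

/-- A reduced irreducible crystallographic root system in `V`. -/
structure IsRootSystem {V : Type*} [NormedAddCommGroup V] [InnerProductSpace ℝ V]
    (Φ : Set V) : Prop where
  finite : Φ.Finite
  spans : Submodule.span ℝ Φ = ⊤
  not_zero : (0 : V) ∉ Φ
  reduced : ∀ a ∈ Φ, ∀ t : ℝ, t • a ∈ Φ → t = 1 ∨ t = -1
  refl_mem : ∀ a ∈ Φ, ∀ b ∈ Φ, reflMap a b ∈ Φ
  crystallographic : ∀ a ∈ Φ, ∀ b ∈ Φ, ∃ k : ℤ, 2 * ⟪a, b⟫ / ⟪a, a⟫ = (k : ℝ)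
  irreducible : ¬ ∃ Φ₁ Φ₂ : Set V, Φ₁.Nonempty ∧ Φ₂.Nonempty ∧ Φ₁ ∪ Φ₂ = Φ ∧
    ∀ a ∈ Φ₁, ∀ b ∈ Φ₂, ⟪a, b⟫ = 0

/-- `α : Fin n → V` is a base (system of simple roots) of `Φ`. -/
structure IsBase {V : Type*} [NormedAddCommGroup V] [InnerProductSpace ℝ V]
    (Φ : Set V) {n : ℕ} (α : Fin n → V) : Prop where
  mem : ∀ i, α i ∈ Φ
  indep : LinearIndependent ℝ α
  spans : Submodule.span ℝ (Set.range α) = ⊤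
  int_comb : ∀ β ∈ Φ, ∃ c : Fin n → ℤ,
    β = ∑ i, (c i : ℝ) • α i ∧ ((∀ i, 0 ≤ c i) ∨ (∀ i, c i ≤ 0))

/-- `α₀ = ∑ mᵢ αᵢ` is the highest root of `Φ` w.r.t. the base `α`. -/
structure IsHighestRoot {V : Type*} [NormedAddCommGroup V] [InnerProductSpace ℝ V]
    (Φ : Set V) {n : ℕ} (α : Fin n → V) (m : Fin n → ℕ) (α₀ : V) : Prop where
  pos : ∀ i, 0 < m i
  mem : α₀ ∈ Φ
  eq : α₀ = ∑ i, (m i : ℝ) • α i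
  highest : ∀ β ∈ Φ, ∀ c : Fin n → ℤ, β = ∑ i, (c i : ℝ) • α i → ∀ i, c i ≤ (m i : ℤ)

/-- The Weyl group of `Φ`, generated by the reflections in the roots. -/
noncomputable def WeylGroup {V : Type*} [NormedAddCommGroup V] [InnerProductSpace ℝ V]
    (Φ : Set V) : Subgroup (V ≃ₗᵢ[ℝ] V) :=
  Subgroup.closure {w : V ≃ₗᵢ[ℝ] V | ∃ a ∈ Φ, ∀ x, w x = reflMap a x}

/-- The fundamental alcove. -/
def alcove {V : Type*} [NormedAddCommGroup V] [InnerProductSpace ℝ V]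
    {n : ℕ} (α : Fin n → V) (α₀ : V) : Set V :=
  {x | (∀ i, 0 ≤ ⟪α i, x⟫) ∧ ⟪α₀, x⟫ ≤ 1}

/-- The coweight lattice `P^∨`. -/
def coweightLattice {V : Type*} [NormedAddCommGroup V] [InnerProductSpace ℝ V]
    (Φ : Set V) : Set V :=
  {ω | ∀ a ∈ Φ, ∃ k : ℤ, ⟪ω, a⟫ = (k : ℝ)}

/-- The coroot lattice `Q^∨`: the `ℤ`-span of the coroots. -/
def corootLattice {V : Type*} [NormedAddCommGroup V] [InnerProductSpace ℝ V]
    (Φ : Set V) : Set V :=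
  (Submodule.span ℤ ((fun a : V => (2 / ⟪a, a⟫) • a) '' Φ) : Set V)

/-- The extended affine Weyl group `W_ext = {t_γ ∘ w : γ ∈ P^∨, w ∈ W}` inside `E(V)`. -/
noncomputable def extendedWeylGroup {V : Type*} [NormedAddCommGroup V] [InnerProductSpace ℝ V]
    (Φ : Set V) : Set (V ≃ᵃⁱ[ℝ] V) :=
  {ζ | ∃ γ ∈ coweightLattice Φ, ∃ w ∈ WeylGroup Φ, ∀ x, ζ x = w x + γ}

/-- The affine Weyl group `W_aff = {t_γ ∘ w : γ ∈ Q^∨, w ∈ W}` inside `E(V)`. -/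
noncomputable def affineWeylGroup {V : Type*} [NormedAddCommGroup V] [InnerProductSpace ℝ V]
    (Φ : Set V) : Set (V ≃ᵃⁱ[ℝ] V) :=
  {ζ | ∃ γ ∈ corootLattice Φ, ∃ w ∈ WeylGroup Φ, ∀ x, ζ x = w x + γ}

/-- The fundamental group `Ω`: the stabilizer of the alcove in `W_ext`. -/
noncomputable def fundGroup {V : Type*} [NormedAddCommGroup V] [InnerProductSpace ℝ V]
    (Φ : Set V) {n : ℕ} (α : Fin n → V) (α₀ : V) : Set (V ≃ᵃⁱ[ℝ] V) :=
  {ζ | ζ ∈ extendedWeylGroup Φ ∧ ζ '' alcove α α₀ = alcove α α₀}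

/-- The Komrakov–Premet polytope. -/
def kpPolytope {V : Type*} [NormedAddCommGroup V] [InnerProductSpace ℝ V]
    {n : ℕ} (α : Fin n → V) (m : Fin n → ℕ) (α₀ : V) : Set V :=
  {x ∈ alcove α α₀ | ∀ j, m j = 1 → ⟪α₀ + α j, x⟫ ≤ 1}

section Aux

variable {V : Type*} [NormedAddCommGroup V] [InnerProductSpace ℝ V]

/-! ### Reflections, coroots and the Weyl group -/

/-- The coroot `a^∨ = 2a / (a, a)`. -/
noncomputable def coroot (a : V) : V := (2 / ⟪a, a⟫) • a

lemma reflMap_eq (a x : V) : reflMap a x = x - ⟪a, x⟫ • coroot a := by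
  rw [reflMap, coroot, smul_smul]
  congr 2
  ring

/-- The reflection `s_a` as a linear isometry. -/
noncomputable def reflIso (a : V) : V ≃ₗᵢ[ℝ] V := (ℝ ∙ a)ᗮ.reflection

lemma reflIso_apply (a x : V) : reflIso a x = reflMap a x := by
  rw [reflIso, Submodule.reflection_orthogonal_apply, Submodule.reflection_singleton_apply,
    reflMap, real_inner_self_eq_norm_sq]
  simp only [RCLike.ofReal_real_eq_id, id_eq]
  rw [two_smul, neg_sub, ← add_smul, ← two_mul, ← mul_div_assoc]

lemma reflIso_mul_self (a : V) : reflIso a * reflIso a = 1 := by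
  ext x
  simp [reflIso]

lemma reflIso_invol (a x : V) : reflIso a (reflIso a x) = x := by
  simp [reflIso]

lemma reflIso_self {a : V} (ha : a ≠ 0) : reflIso a a = -a := by
  have : ⟪a, a⟫ ≠ 0 := inner_self_ne_zero.mpr ha
  rw [reflIso_apply, reflMap, mul_div_assoc, div_self this, mul_one, two_smul]
  abel

lemma reflIso_neg (a : V) : reflIso (-a) = reflIso a := by
  ext x
  simp [reflIso_apply, reflMap, neg_div]

/-- Conjugation of reflections: `w s_a = s_{w a} w`. -/
lemma mul_reflIso (w : V ≃ₗᵢ[ℝ] V) (a : V) : w * reflIso a = reflIso (w a) * w := by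
  ext x
  simp [reflIso_apply, reflMap]

lemma map_coroot (w : V ≃ₗᵢ[ℝ] V) (a : V) : w (coroot a) = coroot (w a) := by
  simp [coroot]

lemma coroot_neg (a : V) : coroot (-a) = -coroot a := by
  simp [coroot]

variable {Φ : Set V}

lemma reflIso_mem {a : V} (ha : a ∈ Φ) : reflIso a ∈ WeylGroup Φ :=
  Subgroup.subset_closure ⟨a, ha, reflIso_apply a⟩

/-- Induction over the Weyl group, one reflection at a time. -/
lemma weyl_induction {p : (V ≃ₗᵢ[ℝ] V) → Prop} (h1 : p 1)
    (hs : ∀ a ∈ Φ, ∀ w, w ∈ WeylGroup Φ → p w → p (reflIso a * w))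
    {w : V ≃ₗᵢ[ℝ] V} (hw : w ∈ WeylGroup Φ) : p w := by
  have key : ∀ u ∈ {w : V ≃ₗᵢ[ℝ] V | ∃ a ∈ Φ, ∀ x, w x = reflMap a x},
      ∃ a ∈ Φ, u = reflIso a := by
    rintro u ⟨a, ha, hu⟩
    exact ⟨a, ha, by ext x; rw [hu, reflIso_apply]⟩
  refine Subgroup.closure_induction_left (p := fun w _ => p w) h1 ?_ ?_ hw
  · intro u hu y hy h
    obtain ⟨a, ha, rfl⟩ := key u hu
    exact hs a ha y hy h
  · intro u hu y hy h
    obtain ⟨a, ha, rfl⟩ := key u hu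
    rw [inv_eq_of_mul_eq_one_right (reflIso_mul_self a)]
    exact hs a ha y hy h

namespace IsRootSystem

variable (hΦ : IsRootSystem Φ)
include hΦ

lemma ne_zero {a : V} (ha : a ∈ Φ) : a ≠ 0 := fun h => hΦ.not_zero (h ▸ ha)

lemma weyl_mem {w : V ≃ₗᵢ[ℝ] V} (hw : w ∈ WeylGroup Φ) {a : V} (ha : a ∈ Φ) : w a ∈ Φ := by
  refine weyl_induction (p := fun w => ∀ a ∈ Φ, w a ∈ Φ) (fun a ha => ha) ?_ hw a ha
  intro b hb w _ h a ha
  change reflIso b (w a) ∈ Φ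
  rw [reflIso_apply]
  exact hΦ.refl_mem b hb _ (h a ha)

lemma neg_mem {a : V} (ha : a ∈ Φ) : -a ∈ Φ := by
  rw [← reflIso_self (hΦ.ne_zero ha)]
  exact hΦ.weyl_mem (reflIso_mem ha) ha

/-- `W` embeds into the self-maps of the finite spanning set `Φ`. -/
lemma weyl_finite : (WeylGroup Φ : Set (V ≃ₗᵢ[ℝ] V)).Finite := by
  have : Finite Φ := hΦ.finite
  let f : WeylGroup Φ → (Φ → Φ) := fun w a => ⟨w.1 a.1, hΦ.weyl_mem w.2 a.2⟩
  have hf : Function.Injective f := by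
    intro u w h
    apply Subtype.ext
    apply LinearIsometryEquiv.toLinearEquiv_injective
    apply LinearEquiv.toLinearMap_injective
    refine LinearMap.ext_on hΦ.spans ?_
    intro a ha
    exact congrArg Subtype.val (congrFun h ⟨a, ha⟩)
  exact Finite.of_injective f hf

end IsRootSystem

/-! ### The lattices and the two affine groups -/

/-- The coweight lattice as an additive subgroup. -/
def coweightSubgroup (Φ : Set V) : AddSubgroup V where
  carrier := coweightLattice Φ
  zero_mem' := fun a _ => ⟨0, by simp⟩
  add_mem' := by
    intro x y hx hy a ha
    obtain ⟨k, hk⟩ := hx a ha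
    obtain ⟨l, hl⟩ := hy a ha
    exact ⟨k + l, by rw [inner_add_left, hk, hl]; push_cast; rfl⟩
  neg_mem' := by
    intro x hx a ha
    obtain ⟨k, hk⟩ := hx a ha
    exact ⟨-k, by rw [inner_neg_left, hk]; push_cast; rfl⟩

/-- The coroot lattice as an additive subgroup. -/
def corootSubgroup (Φ : Set V) : AddSubgroup V :=
  (Submodule.span ℤ ((fun a : V => (2 / ⟪a, a⟫) • a) '' Φ)).toAddSubgroup

lemma coroot_mem {a : V} (ha : a ∈ Φ) : coroot a ∈ corootSubgroup Φ :=
  Submodule.subset_span ⟨a, ha, rfl⟩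

lemma corootSubgroup_le {L : AddSubgroup V} (h : ∀ a ∈ Φ, coroot a ∈ L) :
    corootSubgroup Φ ≤ L := by
  intro x hx
  refine Submodule.span_induction (p := fun x _ => x ∈ L) ?_ L.zero_mem
    (fun _ _ _ _ => L.add_mem) (fun k _ _ h => L.zsmul_mem h k) hx
  rintro _ ⟨a, ha, rfl⟩
  exact h a ha

/-- The isometry `t_γ ∘ w`. -/
noncomputable def affMap (γ : V) (w : V ≃ₗᵢ[ℝ] V) : V ≃ᵃⁱ[ℝ] V :=
  w.toAffineIsometryEquiv.trans (AffineIsometryEquiv.constVAdd ℝ V γ)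

lemma affMap_apply (γ : V) (w : V ≃ₗᵢ[ℝ] V) (x : V) : affMap γ w x = w x + γ := by
  simp [affMap, add_comm]

/-- The group `{t_γ ∘ w : γ ∈ L, w ∈ W}` attached to a `W`-stable subgroup `L` of `V`. -/
noncomputable def latticeGroup (Φ : Set V) (L : AddSubgroup V)
    (hL : ∀ w ∈ WeylGroup Φ, ∀ γ ∈ L, w γ ∈ L) : Subgroup (V ≃ᵃⁱ[ℝ] V) where
  carrier := {ζ | ∃ γ ∈ L, ∃ w ∈ WeylGroup Φ, ∀ x, ζ x = w x + γ}
  one_mem' := ⟨0, L.zero_mem, 1, one_mem _, fun x => by simp⟩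
  mul_mem' := by
    rintro ζ ξ ⟨γ, hγ, w, hw, h⟩ ⟨δ, hδ, u, hu, h'⟩
    refine ⟨w δ + γ, L.add_mem (hL w hw δ hδ) hγ, w * u, mul_mem hw hu, fun x => ?_⟩
    simp [h, h', add_assoc]
  inv_mem' := by
    rintro ζ ⟨γ, hγ, w, hw, h⟩
    refine ⟨-(w⁻¹ γ), L.neg_mem (hL _ (inv_mem hw) _ hγ), w⁻¹, inv_mem hw, fun x => ?_⟩
    rw [AffineIsometryEquiv.coe_inv, AffineIsometryEquiv.symm_apply_eq, h]
    simp

namespace IsRootSystem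

variable (hΦ : IsRootSystem Φ)
include hΦ

lemma coweight_stable : ∀ w ∈ WeylGroup Φ, ∀ γ ∈ coweightSubgroup Φ,
    w γ ∈ coweightSubgroup Φ := by
  intro w hw γ hγ a ha
  obtain ⟨k, hk⟩ := hγ _ (hΦ.weyl_mem (inv_mem hw) ha)
  refine ⟨k, ?_⟩
  rw [← hk, ← LinearIsometryEquiv.inner_map_map w γ]
  simp

lemma coroot_stable : ∀ w ∈ WeylGroup Φ, ∀ γ ∈ corootSubgroup Φ,
    w γ ∈ corootSubgroup Φ := by
  intro w hw γ hγ
  refine corootSubgroup_le (Φ := Φ)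
    (L := (corootSubgroup Φ).comap w.toLinearEquiv.toAddEquiv.toAddMonoidHom) ?_ hγ
  intro a ha
  change w (coroot a) ∈ corootSubgroup Φ
  rw [map_coroot]
  exact coroot_mem (hΦ.weyl_mem hw ha)

lemma coroot_le_coweight : corootSubgroup Φ ≤ coweightSubgroup Φ := by
  refine corootSubgroup_le fun a ha b hb => ?_
  obtain ⟨k, hk⟩ := hΦ.crystallographic a ha b hb
  refine ⟨k, ?_⟩
  rw [← hk, coroot, inner_smul_left]
  simp only [conj_trivial]
  ring

lemma ext_eq : extendedWeylGroup Φ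
    = (latticeGroup Φ (coweightSubgroup Φ) hΦ.coweight_stable : Set (V ≃ᵃⁱ[ℝ] V)) := rfl

lemma aff_eq : affineWeylGroup Φ
    = (latticeGroup Φ (corootSubgroup Φ) hΦ.coroot_stable : Set (V ≃ᵃⁱ[ℝ] V)) := rfl

lemma aff_subset_ext : affineWeylGroup Φ ⊆ extendedWeylGroup Φ := by
  rintro ζ ⟨γ, hγ, w, hw, h⟩
  exact ⟨γ, hΦ.coroot_le_coweight hγ, w, hw, h⟩

/-- `W` acts trivially on `P^∨ / Q^∨`. -/
lemma sub_weyl_mem {γ : V} (hγ : γ ∈ coweightSubgroup Φ) {w : V ≃ₗᵢ[ℝ] V}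
    (hw : w ∈ WeylGroup Φ) : γ - w γ ∈ corootSubgroup Φ := by
  refine weyl_induction (p := fun w => γ - w γ ∈ corootSubgroup Φ) ?_ ?_ hw
  · simp [(corootSubgroup Φ).zero_mem]
  · intro a ha w hw h
    have e : γ - (reflIso a * w) γ = (γ - w γ) + ⟪a, w γ⟫ • coroot a := by
      change γ - reflIso a (w γ) = _
      rw [reflIso_apply, reflMap_eq]
      abel
    rw [e]
    refine (corootSubgroup Φ).add_mem h ?_
    obtain ⟨k, hk⟩ := hΦ.coweight_stable w hw γ hγ a ha
    rw [real_inner_comm, hk, Int.cast_smul_eq_zsmul]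
    exact (corootSubgroup Φ).zsmul_mem (coroot_mem ha) k

/-- `W_aff` is normal in `W_ext`. -/
lemma conj_mem {ξ η : V ≃ᵃⁱ[ℝ] V} (hξ : ξ ∈ extendedWeylGroup Φ)
    (hη : η ∈ affineWeylGroup Φ) : ξ * η * ξ⁻¹ ∈ affineWeylGroup Φ := by
  obtain ⟨γ, hγ, u, hu, h⟩ := hξ
  obtain ⟨δ, hδ, w, hw, h'⟩ := hη
  have hc : u * w * u⁻¹ ∈ WeylGroup Φ := mul_mem (mul_mem hu hw) (inv_mem hu)
  refine ⟨u δ + (γ - (u * w * u⁻¹) γ),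
    (corootSubgroup Φ).add_mem (hΦ.coroot_stable u hu δ hδ) (hΦ.sub_weyl_mem hγ hc), _, hc,
    fun x => ?_⟩
  obtain ⟨y, rfl⟩ := ξ.surjective x
  have e1 : (ξ * η * ξ⁻¹) (ξ y) = ξ (η y) := by simp
  rw [e1, h, h', h y]
  simp only [map_add, LinearIsometryEquiv.coe_mul, LinearIsometryEquiv.coe_inv,
    Function.comp_apply, LinearIsometryEquiv.symm_apply_apply]
  abel

/-! ### Minuscule elements of the coroot lattice -/

lemma exists_multiset {γ : V} (hγ : γ ∈ corootSubgroup Φ) :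
    ∃ s : Multiset V, (∀ b ∈ s, b ∈ Φ) ∧ γ = (s.map coroot).sum := by
  refine Submodule.span_induction
    (p := fun γ _ => ∃ s : Multiset V, (∀ b ∈ s, b ∈ Φ) ∧ γ = (s.map coroot).sum)
    ?_ ⟨0, by simp, by simp⟩ ?_ ?_ hγ
  · rintro _ ⟨a, ha, rfl⟩
    exact ⟨{a}, by simpa using ha, by simp [coroot]⟩
  · rintro x y _ _ ⟨s, hs, rfl⟩ ⟨t, ht, rfl⟩
    refine ⟨s + t, fun b hb => ?_, by simp⟩
    rcases Multiset.mem_add.mp hb with h | h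
    exacts [hs b h, ht b h]
  · rintro k x _ ⟨s, hs, rfl⟩
    rcases Int.eq_nat_or_neg k with ⟨n, rfl | rfl⟩
    · refine ⟨n • s, fun b hb => hs b (Multiset.mem_of_mem_nsmul hb), ?_⟩
      rw [Multiset.map_nsmul, Multiset.sum_nsmul, natCast_zsmul]
    · refine ⟨n • (s.map fun b => -b), fun b hb => ?_, ?_⟩
      · obtain ⟨c, hc, rfl⟩ := Multiset.mem_map.mp (Multiset.mem_of_mem_nsmul hb)
        exact hΦ.neg_mem (hs c hc)
      · rw [Multiset.map_nsmul, Multiset.sum_nsmul, neg_smul, natCast_zsmul, Multiset.map_map]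
        simp [coroot_neg]

/-- A sum of coroots whose pairing with every root is at most `1` vanishes: otherwise some summand
`b^∨` has `(b, γ) = 1`, and `γ - b^∨ = s_b γ` has the same property with one summand fewer. -/
lemma minuscule_eq_zero : ∀ (N : ℕ) (s : Multiset V), s.card = N → (∀ b ∈ s, b ∈ Φ) →
    (∀ a ∈ Φ, ⟪a, (s.map coroot).sum⟫ ≤ 1) → (s.map coroot).sum = 0 := by
  intro N
  induction N with
  | zero =>
    intro s hs _ _
    rw [Multiset.card_eq_zero.mp hs]
    simp
  | succ N ih =>
    intro s hs hsΦ hmin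
    by_contra hne
    set γ := (s.map coroot).sum with hγ
    obtain ⟨b, hb, hbpos⟩ : ∃ b ∈ s, 0 < ⟪b, γ⟫ := by
      by_contra! hcon
      have aux : ∀ t : Multiset V, (∀ b ∈ t, ⟪b, γ⟫ ≤ 0) → ⟪(t.map coroot).sum, γ⟫ ≤ 0 := by
        intro t
        induction t using Multiset.induction with
        | empty => simp
        | cons c t iht =>
          intro h
          rw [Multiset.map_cons, Multiset.sum_cons, inner_add_left]
          have h1 := iht fun b hb => h b (Multiset.mem_cons_of_mem hb)
          have h2 : ⟪coroot c, γ⟫ ≤ 0 := by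
            rw [coroot, real_inner_smul_left]
            exact mul_nonpos_of_nonneg_of_nonpos
              (div_nonneg zero_le_two real_inner_self_nonneg) (h c (Multiset.mem_cons_self c t))
          linarith
      have := aux s hcon
      exact hne (inner_self_eq_zero.mp (le_antisymm this real_inner_self_nonneg))
    have hbΦ := hsΦ b hb
    have hγP : γ ∈ coweightSubgroup Φ := by
      refine hΦ.coroot_le_coweight ?_
      refine AddSubgroup.multiset_sum_mem _ _ fun c hc => ?_
      obtain ⟨d, hd, rfl⟩ := Multiset.mem_map.mp hc
      exact coroot_mem (hsΦ d hd)
    have hb1 : ⟪b, γ⟫ = 1 := by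
      obtain ⟨k, hk⟩ := hγP b hbΦ
      rw [real_inner_comm] at hk
      have h1 := hmin b hbΦ
      rw [hk] at hbpos h1 ⊢
      have : 0 < k := by exact_mod_cast hbpos
      have : k ≤ 1 := by exact_mod_cast h1
      have : k = 1 := by omega
      simp [this]
    obtain ⟨t, rfl⟩ := Multiset.exists_cons_of_mem hb
    have hrefl : reflIso b γ = (t.map coroot).sum := by
      rw [reflIso_apply, reflMap_eq, hb1, one_smul, hγ, Multiset.map_cons, Multiset.sum_cons]
      abel
    have h0 : (t.map coroot).sum = 0 := by
      refine ih t (by simpa using hs) (fun c hc => hsΦ c (Multiset.mem_cons_of_mem hc)) ?_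
      intro a ha
      rw [← hrefl, ← LinearIsometryEquiv.inner_map_map (reflIso b), reflIso_invol]
      exact hmin _ (hΦ.weyl_mem (reflIso_mem hbΦ) ha)
    rw [← hrefl] at h0
    exact hne ((map_eq_zero_iff _ (reflIso b).injective).mp h0)

end IsRootSystem

/-! ### Simple reflections -/

variable {n : ℕ} {α : Fin n → V}

/-- Since `α` is a basis of `V`, the numbers `(αᵢ, τ)` can be prescribed. -/
lemma IsBase.exists_inner [FiniteDimensional ℝ V] (hα : IsBase Φ α) (f : Fin n → ℝ) :
    ∃ τ : V, ∀ i, ⟪α i, τ⟫ = f i := by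
  have : CompleteSpace V := FiniteDimensional.complete ℝ V
  let b := Module.Basis.mk hα.indep hα.spans.ge
  let g : V →ₗ[ℝ] ℝ := b.constr ℝ f
  refine ⟨(InnerProductSpace.toDual ℝ V).symm (LinearMap.toContinuousLinearMap g), fun i => ?_⟩
  rw [real_inner_comm, InnerProductSpace.toDual_symm_apply]
  change g (α i) = f i
  have : α i = b i := by simp [b]
  rw [this]
  exact b.constr_basis ℝ f i

/-- The product of the simple reflections along a word in the indices. -/
noncomputable def simpleProd (α : Fin n → V) (l : List (Fin n)) : V ≃ₗᵢ[ℝ] V :=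
  (l.map fun i => reflIso (α i)).prod

lemma simpleProd_cons (i : Fin n) (l : List (Fin n)) :
    simpleProd α (i :: l) = reflIso (α i) * simpleProd α l := by
  simp [simpleProd]

lemma simpleProd_append (l l' : List (Fin n)) :
    simpleProd α (l ++ l') = simpleProd α l * simpleProd α l' := by
  simp [simpleProd]

lemma simpleProd_singleton (i : Fin n) : simpleProd α [i] = reflIso (α i) := by
  simp [simpleProd]

lemma inner_comb (c : Fin n → ℤ) (y : V) :
    ⟪∑ i, (c i : ℝ) • α i, y⟫ = ∑ i, (c i : ℝ) * ⟪α i, y⟫ := by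
  simp [sum_inner, real_inner_smul_left]

section Base

variable (hΦ : IsRootSystem Φ) (hα : IsBase Φ α) {ρ : V} (hρ : ∀ i, ⟪α i, ρ⟫ = 1)
include hΦ hα hρ

lemma root_ne {β : V} (hβ : β ∈ Φ) : ⟪β, ρ⟫ ≠ 0 := by
  intro h
  obtain ⟨c, hc, hs⟩ := hα.int_comb β hβ
  rw [hc, inner_comb] at h
  simp only [hρ, mul_one] at h
  have h0 : ∑ i, c i = 0 := by exact_mod_cast h
  have hz : ∀ i, c i = 0 := by
    rcases hs with hs | hs
    · intro i
      exact (Finset.sum_eq_zero_iff_of_nonneg fun i _ => hs i).mp h0 i (Finset.mem_univ i)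
    · intro i
      exact (Finset.sum_eq_zero_iff_of_nonpos fun i _ => hs i).mp h0 i (Finset.mem_univ i)
  apply hΦ.ne_zero hβ
  rw [hc]
  simp [hz]

lemma pos_or_neg {β : V} (hβ : β ∈ Φ) : 0 < ⟪β, ρ⟫ ∨ 0 < ⟪-β, ρ⟫ := by
  rcases lt_or_gt_of_ne (root_ne hΦ hα hρ hβ) with h | h
  · right
    rw [inner_neg_left]
    linarith
  · exact Or.inl h

omit hΦ in
lemma pos_comb {β : V} (hβ : β ∈ Φ) (hp : 0 < ⟪β, ρ⟫) :
    ∃ c : Fin n → ℤ, β = ∑ i, (c i : ℝ) • α i ∧ ∀ i, 0 ≤ c i := by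
  obtain ⟨c, hc, hs⟩ := hα.int_comb β hβ
  refine ⟨c, hc, hs.resolve_right fun hs => ?_⟩
  rw [hc, inner_comb] at hp
  refine absurd hp (not_lt.mpr (Finset.sum_nonpos fun i _ => ?_))
  rw [hρ, mul_one]
  exact_mod_cast hs i

/-- A simple reflection permutes the positive roots other than its own: some other coefficient is
positive and is left unchanged. -/
lemma simple_perm [FiniteDimensional ℝ V] {β : V} (hβ : β ∈ Φ) (hp : 0 < ⟪β, ρ⟫) {i : Fin n}
    (hne : β ≠ α i) : 0 < ⟪reflIso (α i) β, ρ⟫ := by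
  obtain ⟨c, hc, hs⟩ := pos_comb hα hρ hβ hp
  obtain ⟨j, hji, hj⟩ : ∃ j, j ≠ i ∧ 0 < c j := by
    by_contra! hcon
    have h1 : β = (c i : ℝ) • α i := by
      rw [hc]
      refine Finset.sum_eq_single i (fun j _ hji => ?_) (by simp)
      have : c j = 0 := le_antisymm (hcon j hji) (hs j)
      simp [this]
    have h2 := hΦ.reduced _ (hα.mem i) (c i) (h1 ▸ hβ)
    have h3 : (0 : ℝ) ≤ c i := by exact_mod_cast hs i
    rcases h2 with h2 | h2
    · rw [h2, one_smul] at h1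
      exact hne h1
    · linarith
  obtain ⟨τ, hτ⟩ := hα.exists_inner (fun k => if k = j then 1 else 0)
  have hcoef : ∀ d : Fin n → ℤ, ⟪∑ i, (d i : ℝ) • α i, τ⟫ = d j := by
    intro d
    rw [inner_comb]
    simp [hτ]
  have hmem := hΦ.weyl_mem (reflIso_mem (hα.mem i)) hβ
  obtain ⟨d, hd, hds⟩ := hα.int_comb _ hmem
  have hdj : d j = c j := by
    have h1 : ⟪reflIso (α i) β, τ⟫ = ⟪β, τ⟫ := by
      rw [reflIso_apply, reflMap, inner_sub_left, real_inner_smul_left, hτ, if_neg hji.symm]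
      simp
    rw [hd, hcoef, hc, hcoef] at h1
    exact_mod_cast h1
  rcases pos_or_neg hΦ hα hρ hmem with h | h
  · exact h
  · exfalso
    rcases hds with hds | hds
    · rw [inner_neg_left, hd, inner_comb] at h
      have : 0 ≤ ∑ i, (d i : ℝ) * ⟪α i, ρ⟫ := by
        refine Finset.sum_nonneg fun k _ => ?_
        rw [hρ, mul_one]
        exact_mod_cast hds k
      linarith
    · have := hds j
      omega

/-- Reflections in positive roots are words in the simple reflections, by induction on the
height `(β, ρ)`. -/
lemma refl_word [FiniteDimensional ℝ V] : ∀ (N : ℕ) (β : V), β ∈ Φ → 0 < ⟪β, ρ⟫ → ⟪β, ρ⟫ ≤ N →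
    ∃ l, reflIso β = simpleProd α l := by
  intro N
  induction N with
  | zero =>
    intro β _ hp hN
    simp only [Nat.cast_zero] at hN
    linarith
  | succ N ih =>
    intro β hβ hp hN
    obtain ⟨c, hc, hs⟩ := pos_comb hα hρ hβ hp
    obtain ⟨i, hi⟩ : ∃ i, 0 < ⟪α i, β⟫ := by
      by_contra! hcon
      have h1 : ⟪β, β⟫ ≤ 0 := by
        nth_rewrite 1 [hc]
        rw [inner_comb]
        exact Finset.sum_nonpos fun i _ =>
          mul_nonpos_of_nonneg_of_nonpos (by exact_mod_cast hs i) (hcon i)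
      exact hΦ.ne_zero hβ
        (inner_self_eq_zero.mp (le_antisymm h1 real_inner_self_nonneg))
    by_cases hne : β = α i
    · exact ⟨[i], by rw [hne, simpleProd_singleton]⟩
    · have hheight : ⟪reflIso (α i) β, ρ⟫ ≤ N := by
        obtain ⟨k, hk⟩ := hΦ.crystallographic _ (hα.mem i) β hβ
        have hkpos : (0 : ℝ) < k := by
          rw [← hk]
          exact div_pos (by linarith) (real_inner_self_pos.mpr (hΦ.ne_zero (hα.mem i)))
        have hk1 : (1 : ℝ) ≤ k := by
          have : 0 < k := by exact_mod_cast hkpos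
          exact_mod_cast this
        rw [reflIso_apply, reflMap, hk, inner_sub_left, real_inner_smul_left, hρ]
        push_cast at hN
        linarith
      obtain ⟨l, hl⟩ := ih _ (hΦ.weyl_mem (reflIso_mem (hα.mem i)) hβ)
        (simple_perm hΦ hα hρ hβ hp hne) hheight
      refine ⟨i :: (l ++ [i]), ?_⟩
      rw [simpleProd_cons, simpleProd_append, simpleProd_singleton, ← hl, ← mul_reflIso,
        ← mul_assoc, reflIso_mul_self, one_mul]

lemma weyl_word [FiniteDimensional ℝ V] {w : V ≃ₗᵢ[ℝ] V} (hw : w ∈ WeylGroup Φ) :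
    ∃ l, w = simpleProd α l := by
  refine weyl_induction (p := fun w => ∃ l, w = simpleProd α l) ⟨[], by simp [simpleProd]⟩ ?_ hw
  rintro a ha _ _ ⟨l, rfl⟩
  obtain ⟨l', hl'⟩ : ∃ l', reflIso a = simpleProd α l' := by
    rcases pos_or_neg hΦ hα hρ ha with h | h
    · obtain ⟨N, hN⟩ := exists_nat_ge ⟪a, ρ⟫
      exact refl_word hΦ hα hρ N a ha h hN
    · obtain ⟨N, hN⟩ := exists_nat_ge ⟪-a, ρ⟫
      rw [← reflIso_neg]
      exact refl_word hΦ hα hρ N (-a) (hΦ.neg_mem ha) h hN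
  exact ⟨l' ++ l, by rw [simpleProd_append, hl']⟩

omit hα hρ in
lemma simpleProd_mem (hmem : ∀ i, α i ∈ Φ) (l : List (Fin n)) {β : V} (hβ : β ∈ Φ) :
    simpleProd α l β ∈ Φ := by
  induction l with
  | nil => simpa [simpleProd] using hβ
  | cons j t ih =>
    rw [simpleProd_cons]
    exact hΦ.weyl_mem (reflIso_mem (hmem j)) ih

/-- The exchange condition: if a word sends `αᵢ` to a negative root, then multiplying by `sᵢ` on
the right amounts to deleting a letter. -/
lemma exchange [FiniteDimensional ℝ V] (i : Fin n) : ∀ l : List (Fin n),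
    ⟪simpleProd α l (α i), ρ⟫ < 0 →
    ∃ l' : List (Fin n), l'.length + 1 = l.length ∧
      simpleProd α l * reflIso (α i) = simpleProd α l' := by
  intro l
  induction l with
  | nil =>
    intro h
    simp [simpleProd, hρ] at h
    linarith
  | cons j t ih =>
    intro h
    have hmem := simpleProd_mem hΦ hα.mem t (hα.mem i)
    by_cases ht : ⟪simpleProd α t (α i), ρ⟫ < 0
    · obtain ⟨l', hl, he⟩ := ih ht
      exact ⟨j :: l', by simp [hl], by rw [simpleProd_cons, simpleProd_cons, mul_assoc, he]⟩
    · have htpos : 0 < ⟪simpleProd α t (α i), ρ⟫ :=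
        lt_of_le_of_ne (not_lt.mp ht) (root_ne hΦ hα hρ hmem).symm
      have hj : simpleProd α t (α i) = α j := by
        by_contra hne
        have := simple_perm hΦ hα hρ hmem htpos hne
        rw [simpleProd_cons] at h
        exact absurd h (not_lt.mpr this.le)
      refine ⟨t, by simp, ?_⟩
      rw [simpleProd_cons, mul_assoc, mul_reflIso, hj, ← mul_assoc, reflIso_mul_self, one_mul]

/-- An element of `W` that preserves positivity of roots is the identity: the last letter of a
nonempty word for it could be cancelled together with another one. -/
lemma eq_one_of_pos [FiniteDimensional ℝ V] {w : V ≃ₗᵢ[ℝ] V} (hw : w ∈ WeylGroup Φ)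
    (hpos : ∀ β ∈ Φ, 0 < ⟪β, ρ⟫ → 0 < ⟪w β, ρ⟫) : w = 1 := by
  have main : ∀ (N : ℕ) (l : List (Fin n)), l.length ≤ N → simpleProd α l = w → w = 1 := by
    intro N
    induction N with
    | zero =>
      intro l hl he
      rw [List.length_eq_zero_iff.mp (Nat.le_zero.mp hl)] at he
      rw [← he]
      simp [simpleProd]
    | succ N ih =>
      intro l hl he
      rcases List.eq_nil_or_concat l with rfl | ⟨t, i, rfl⟩
      · rw [← he]
        simp [simpleProd]
      · rw [List.concat_eq_append] at he hl
        rw [simpleProd_append, simpleProd_singleton] at he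
        have hi := hpos _ (hα.mem i) (by rw [hρ]; exact one_pos)
        rw [← he] at hi
        have hneg : ⟪simpleProd α t (α i), ρ⟫ < 0 := by
          change 0 < ⟪simpleProd α t (reflIso (α i) (α i)), ρ⟫ at hi
          rw [reflIso_self (hΦ.ne_zero (hα.mem i)), map_neg, inner_neg_left] at hi
          linarith
        obtain ⟨l', hl', he'⟩ := exchange hΦ hα hρ i t hneg
        refine ih l' ?_ (he' ▸ he)
        simp only [List.length_append, List.length_singleton] at hl
        omega
  obtain ⟨l, hl⟩ := weyl_word hΦ hα hρ hw
  exact main l.length l le_rfl hl.symm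

/-! ### Alcoves -/

variable {m : Fin n → ℕ} {α₀ : V} (h₀ : IsHighestRoot Φ α m α₀)
include h₀

omit hΦ in
/-- On the dominant chamber the highest root dominates every positive root. -/
lemma inner_bounds {β : V} (hβ : β ∈ Φ) (hp : 0 < ⟪β, ρ⟫) {y : V} (hy : ∀ i, 0 ≤ ⟪α i, y⟫) :
    0 ≤ ⟪β, y⟫ ∧ ⟪β, y⟫ ≤ ⟪α₀, y⟫ := by
  obtain ⟨c, hc, hs⟩ := pos_comb hα hρ hβ hp
  have hm := h₀.highest β hβ c hc
  have e₀ : α₀ = ∑ i, (((m i : ℕ) : ℤ) : ℝ) • α i := by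
    rw [h₀.eq]
    simp
  rw [e₀, hc, inner_comb, inner_comb]
  constructor
  · exact Finset.sum_nonneg fun i _ => mul_nonneg (by exact_mod_cast hs i) (hy i)
  · exact Finset.sum_le_sum fun i _ =>
      mul_le_mul_of_nonneg_right (by exact_mod_cast hm i) (hy i)

lemma highest_pos : 0 < ⟪α₀, ρ⟫ := by
  rcases pos_or_neg hΦ hα hρ h₀.mem with h | h
  · exact h
  · have := inner_bounds hα hρ h₀ (hΦ.neg_mem h₀.mem) h (y := ρ) fun i => by
      rw [hρ]
      exact zero_le_one
    rw [inner_neg_left] at this h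
    linarith

lemma mem_alcove_iff {y : V} : y ∈ alcove α α₀ ↔
    ∀ β ∈ Φ, 0 < ⟪β, ρ⟫ → 0 ≤ ⟪β, y⟫ ∧ ⟪β, y⟫ ≤ 1 := by
  constructor
  · rintro ⟨h, h1⟩ β hβ hp
    have := inner_bounds hα hρ h₀ hβ hp h
    exact ⟨this.1, this.2.trans h1⟩
  · intro h
    refine ⟨fun i => (h _ (hα.mem i) (by rw [hρ]; exact one_pos)).1, ?_⟩
    exact (h _ h₀.mem (highest_pos hΦ hα hρ h₀)).2

omit hΦ hα hρ h₀ in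
/-- The open alcove, described by all roots that are positive on `ρ`. -/
def openAlcove (Φ : Set V) (ρ : V) : Set V :=
  {y | ∀ β ∈ Φ, 0 < ⟪β, ρ⟫ → 0 < ⟪β, y⟫ ∧ ⟪β, y⟫ < 1}

lemma openAlcove_nonempty : ∃ p, p ∈ openAlcove Φ ρ := by
  have hpos := highest_pos hΦ hα hρ h₀
  refine ⟨(1 / (1 + ⟪α₀, ρ⟫)) • ρ, fun β hβ hp => ?_⟩
  have hle := (inner_bounds hα hρ h₀ hβ hp (y := ρ) fun i => by
    rw [hρ]
    exact zero_le_one).2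
  rw [real_inner_smul_right, one_div, inv_mul_eq_div]
  refine ⟨div_pos hp (by linarith), ?_⟩
  rw [div_lt_one (by linarith)]
  linarith

lemma openAlcove_subset : openAlcove Φ ρ ⊆ alcove α α₀ := by
  intro y hy
  rw [mem_alcove_iff hΦ hα hρ h₀]
  exact fun β hβ hp => ⟨(hy β hβ hp).1.le, (hy β hβ hp).2.le⟩

/-- Every image of the alcove under `W_ext` lies in a unit strip of each root. -/
lemma strip {ξ : V ≃ᵃⁱ[ℝ] V} (hξ : ξ ∈ extendedWeylGroup Φ) {a : V} (ha : a ∈ Φ) :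
    ∃ k : ℤ, (∀ y ∈ alcove α α₀, (k : ℝ) ≤ ⟪a, ξ y⟫ ∧ ⟪a, ξ y⟫ ≤ k + 1) ∧
      ∀ y ∈ openAlcove Φ ρ, (k : ℝ) < ⟪a, ξ y⟫ ∧ ⟪a, ξ y⟫ < k + 1 := by
  obtain ⟨γ, hγ, w, hw, h⟩ := hξ
  obtain ⟨k, hk⟩ := hγ a ha
  have hval : ∀ y, ⟪a, ξ y⟫ = ⟪w⁻¹ a, y⟫ + k := by
    intro y
    rw [h, inner_add_right, ← hk, real_inner_comm a γ]
    congr 1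
    rw [← LinearIsometryEquiv.inner_map_map w (w⁻¹ a)]
    simp
  have hb := hΦ.weyl_mem (inv_mem hw) ha
  rcases pos_or_neg hΦ hα hρ hb with hp | hp
  · refine ⟨k, fun y hy => ?_, fun y hy => ?_⟩
    · have := (mem_alcove_iff hΦ hα hρ h₀).mp hy _ hb hp
      rw [hval]
      constructor <;> linarith
    · have := hy _ hb hp
      rw [hval]
      constructor <;> linarith
  · refine ⟨k - 1, fun y hy => ?_, fun y hy => ?_⟩
    · have := (mem_alcove_iff hΦ hα hρ h₀).mp hy _ (hΦ.neg_mem hb) hp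
      rw [inner_neg_left] at this
      rw [hval]
      push_cast
      constructor <;> linarith
    · have := hy _ (hΦ.neg_mem hb) hp
      rw [inner_neg_left] at this
      rw [hval]
      push_cast
      constructor <;> linarith

lemma maps_alcove {ξ : V ≃ᵃⁱ[ℝ] V} (hξ : ξ ∈ extendedWeylGroup Φ) {p : V}
    (hp : p ∈ openAlcove Φ ρ) (hq : ξ p ∈ openAlcove Φ ρ) {y : V} (hy : y ∈ alcove α α₀) :
    ξ y ∈ alcove α α₀ := by
  rw [mem_alcove_iff hΦ hα hρ h₀]
  intro β hβ hβp
  obtain ⟨k, hA, hO⟩ := strip hΦ hα hρ h₀ hξ hβ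
  have h1 := hO p hp
  have h2 := hq β hβ hβp
  have h3 := hA y hy
  have hk : k = 0 := by
    have e1 : (k : ℝ) < 1 := by linarith
    have e2 : (-1 : ℝ) < k := by linarith
    have e3 : k < 1 := by exact_mod_cast e1
    have e4 : -1 < k := by exact_mod_cast e2
    omega
  rw [hk] at h3
  simpa using h3

/-- An element of `W_ext` sending one interior point of the alcove to another preserves the
alcove. -/
lemma image_alcove {ξ : V ≃ᵃⁱ[ℝ] V} (hξ : ξ ∈ extendedWeylGroup Φ) {p : V}
    (hp : p ∈ openAlcove Φ ρ) (hq : ξ p ∈ openAlcove Φ ρ) :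
    ξ '' alcove α α₀ = alcove α α₀ := by
  refine Set.Subset.antisymm ?_ ?_
  · rintro _ ⟨y, hy, rfl⟩
    exact maps_alcove hΦ hα hρ h₀ hξ hp hq hy
  · intro y hy
    have hinv : ξ⁻¹ ∈ extendedWeylGroup Φ := by
      rw [hΦ.ext_eq] at hξ ⊢
      exact inv_mem hξ
    refine ⟨ξ⁻¹ y, maps_alcove hΦ hα hρ h₀ hinv hq (by simpa using hp) hy, by simp⟩

/-- The stabilizer of `x` in `W_aff` moves any alcove containing `x` onto the fundamental one:
among its elements `η`, represented by their linear parts `w`, one for which `η (ζ p)` is closest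
to an interior point `p` has `η (ζ p)` and `p` on the same side of every wall through `x`. -/
lemma exists_aff {x : V} (hx : x ∈ alcove α α₀) {ζ : V ≃ᵃⁱ[ℝ] V}
    (hζ : ζ ∈ extendedWeylGroup Φ) (hζx : ζ x = x) :
    ∃ η ∈ affineWeylGroup Φ, η x = x ∧ (η * ζ) '' alcove α α₀ = alcove α α₀ := by
  obtain ⟨p, hp⟩ := openAlcove_nonempty hΦ hα hρ h₀
  let S : Set (V ≃ₗᵢ[ℝ] V) := {w | w ∈ WeylGroup Φ ∧ x - w x ∈ corootSubgroup Φ}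
  have hSfin : S.Finite := hΦ.weyl_finite.subset fun w hw => hw.1
  have hSne : S.Nonempty := ⟨1, one_mem _, by simp [(corootSubgroup Φ).zero_mem]⟩
  obtain ⟨w, ⟨hw, hwx⟩, hmin⟩ :=
    Set.exists_min_image S (fun w => ‖x + w (ζ p - x) - p‖) hSfin hSne
  set q := x + w (ζ p - x) with hqdef
  have hη : affMap (x - w x) w ∈ affineWeylGroup Φ :=
    ⟨x - w x, hwx, w, hw, affMap_apply _ _⟩
  have hηx : affMap (x - w x) w x = x := by
    rw [affMap_apply]
    abel
  have hηq : (affMap (x - w x) w * ζ) p = q := by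
    rw [AffineIsometryEquiv.coe_mul, Function.comp_apply, affMap_apply, hqdef, map_sub]
    abel
  have hηζ : affMap (x - w x) w * ζ ∈ extendedWeylGroup Φ := by
    have h1 := hΦ.aff_subset_ext hη
    rw [hΦ.ext_eq] at h1 hζ ⊢
    exact mul_mem h1 hζ
  refine ⟨_, hη, hηx, image_alcove hΦ hα hρ h₀ hηζ hp ?_⟩
  -- `p` and `q` are not separated by a wall through `x`.
  have hsep : ∀ a ∈ Φ, ∀ k : ℤ, ⟪a, x⟫ = k → 0 ≤ (⟪a, q⟫ - k) * (⟪a, p⟫ - k) := by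
    intro a ha k hk
    by_contra! hneg
    have hS : reflIso a * w ∈ S := by
      refine ⟨mul_mem (reflIso_mem ha) hw, ?_⟩
      have e : x - (reflIso a * w) x = k • coroot a + reflIso a (x - w x) := by
        change x - reflIso a (w x) = _
        rw [map_sub, reflIso_apply a x, reflMap_eq, hk, Int.cast_smul_eq_zsmul]
        abel
      rw [e]
      exact (corootSubgroup Φ).add_mem ((corootSubgroup Φ).zsmul_mem (coroot_mem ha) k)
        (hΦ.coroot_stable _ (reflIso_mem ha) _ hwx)
    have hle := hmin _ hS
    have haa : 0 < ⟪a, a⟫ := real_inner_self_pos.mpr (hΦ.ne_zero ha)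
    have e1 : x + (reflIso a * w) (ζ p - x) - p
        = (q - p) - (2 * (⟪a, q⟫ - k) / ⟪a, a⟫) • a := by
      have e2 : w (ζ p - x) = q - x := by
        rw [hqdef]
        abel
      change x + reflIso a (w (ζ p - x)) - p = _
      rw [e2, reflIso_apply, reflMap, inner_sub_right, hk]
      abel
    have e3 : ‖x + (reflIso a * w) (ζ p - x) - p‖ ^ 2
        = ‖q - p‖ ^ 2 + 4 * ((⟪a, q⟫ - k) * (⟪a, p⟫ - k)) / ⟪a, a⟫ := by
      rw [e1, norm_sub_sq_real, norm_smul, mul_pow, ← real_inner_self_eq_norm_sq a,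
        real_inner_smul_right, Real.norm_eq_abs, sq_abs, inner_sub_left, real_inner_comm a q,
        real_inner_comm a p]
      field_simp
      ring
    have h4 : 4 * ((⟪a, q⟫ - k) * (⟪a, p⟫ - k)) / ⟪a, a⟫ < 0 :=
      div_neg_of_neg_of_pos (by linarith) haa
    have h5 : ‖q - p‖ ^ 2 ≤ ‖x + (reflIso a * w) (ζ p - x) - p‖ ^ 2 :=
      pow_le_pow_left₀ (norm_nonneg _) hle 2
    linarith
  rw [hηq]
  intro β hβ hβp
  obtain ⟨k, hA, hO⟩ := strip hΦ hα hρ h₀ hηζ hβ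
  have h1 := hO p hp
  have h2 := hA x hx
  have hx' : (affMap (x - w x) w * ζ) x = x := by
    rw [AffineIsometryEquiv.coe_mul, Function.comp_apply, hζx, hηx]
  rw [hηq] at h1
  rw [hx'] at h2
  have h3 := (mem_alcove_iff hΦ hα hρ h₀).mp hx β hβ hβp
  have h4 := hp β hβ hβp
  -- The strip of `β` containing `q` contains `x`; only the value at a wall through `x` leaves a
  -- choice of strip, and `hsep` settles it.
  have hk : k = 0 := by
    have e1 : (k : ℝ) ≤ 1 := by linarith
    have e2 : (-1 : ℝ) ≤ k := by linarith
    have e3 : k ≤ 1 := by exact_mod_cast e1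
    have e4 : -1 ≤ k := by exact_mod_cast e2
    have : k = -1 ∨ k = 0 ∨ k = 1 := by omega
    rcases this with rfl | h | rfl
    · push_cast at h1 h2
      have := hsep β hβ 0 (by push_cast; linarith)
      push_cast at this
      nlinarith
    · exact h
    · push_cast at h1 h2
      have := hsep β hβ 1 (by push_cast; linarith)
      push_cast at this
      nlinarith
  rw [hk] at h1
  simpa using h1

/-- `Ω ∩ W_aff` is trivial: such an element sends `0` to a point of `A ∩ Q^∨`, which is minuscule
and therefore `0`, and its linear part preserves positivity. -/
lemma aff_eq_one [FiniteDimensional ℝ V] {η : V ≃ᵃⁱ[ℝ] V} (hη : η ∈ affineWeylGroup Φ)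
    (hA : η '' alcove α α₀ = alcove α α₀) : η = 1 := by
  obtain ⟨γ, hγ, w, hw, h⟩ := hη
  have hγA : γ ∈ alcove α α₀ := by
    rw [← hA]
    exact ⟨0, ⟨by simp, by simp⟩, by simp [h]⟩
  rw [mem_alcove_iff hΦ hα hρ h₀] at hγA
  have hγ0 : γ = 0 := by
    obtain ⟨s, hs, rfl⟩ := hΦ.exists_multiset hγ
    refine hΦ.minuscule_eq_zero _ s rfl hs fun a ha => ?_
    rcases pos_or_neg hΦ hα hρ ha with hp | hp
    · exact (hγA a ha hp).2
    · have := (hγA _ (hΦ.neg_mem ha) hp).1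
      rw [inner_neg_left] at this
      linarith
  have hw1 : w⁻¹ = 1 := by
    refine eq_one_of_pos hΦ hα hρ (inv_mem hw) fun β hβ hβp => ?_
    obtain ⟨p, hp⟩ := openAlcove_nonempty hΦ hα hρ h₀
    have hmem := hΦ.weyl_mem (inv_mem hw) hβ
    rcases pos_or_neg hΦ hα hρ hmem with h' | h'
    · exact h'
    · exfalso
      have h1 := (hp _ (hΦ.neg_mem hmem) h').1
      have h2 : w p ∈ alcove α α₀ := by
        rw [← hA]
        exact ⟨p, openAlcove_subset hΦ hα hρ h₀ hp, by rw [h, hγ0, add_zero]⟩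
      have h3 := ((mem_alcove_iff hΦ hα hρ h₀).mp h2 β hβ hβp).1
      have h4 : ⟪β, w p⟫ = ⟪w⁻¹ β, p⟫ := by
        rw [← LinearIsometryEquiv.inner_map_map w (w⁻¹ β)]
        simp
      rw [inner_neg_left] at h1
      linarith
  ext y
  rw [h, hγ0, inv_eq_one.mp hw1]
  simp

end Base

end Aux


/-! ### The stabilizer of a point of the alcove -/

theorem statement_19
    {V : Type*} [NormedAddCommGroup V] [InnerProductSpace ℝ V] [FiniteDimensional ℝ V]
    (Φ : Set V) (hΦ : IsRootSystem Φ)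
    {n : ℕ} (α : Fin n → V) (hα : IsBase Φ α)
    (m : Fin n → ℕ) (α₀ : V) (h₀ : IsHighestRoot Φ α m α₀)
    (x : V) (hx : x ∈ alcove α α₀)
    (ζ : V ≃ᵃⁱ[ℝ] V) (hζ : ζ ∈ extendedWeylGroup Φ) (hζx : ζ x = x) :
    -- `ζ = ω ∘ η` with `ω ∈ Ω`, `η ∈ W_aff`, both fixing `x`, uniquely so:
    (∃! p : (V ≃ᵃⁱ[ℝ] V) × (V ≃ᵃⁱ[ℝ] V),
      p.1 ∈ fundGroup Φ α α₀ ∧ p.2 ∈ affineWeylGroup Φ ∧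
      p.1 x = x ∧ p.2 x = x ∧ ζ = p.1 * p.2) ∧
    -- the stabilizer of `x` in `W_aff` is normalized by the stabilizer of `x` in `W_ext`:
    (∀ ξ ∈ extendedWeylGroup Φ, ξ x = x →
      ∀ η ∈ affineWeylGroup Φ, η x = x →
        ξ * η * ξ⁻¹ ∈ affineWeylGroup Φ ∧ (ξ * η * ξ⁻¹) x = x) := by
  obtain ⟨ρ, hρ⟩ := hα.exists_inner fun _ => 1
  have hinvx : ∀ ξ : V ≃ᵃⁱ[ℝ] V, ξ x = x → ξ⁻¹ x = x := by
    intro ξ h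
    rw [AffineIsometryEquiv.coe_inv, AffineIsometryEquiv.symm_apply_eq, h]
  have hinvA : ∀ ξ : V ≃ᵃⁱ[ℝ] V, ξ '' alcove α α₀ = alcove α α₀ →
      (ξ⁻¹ : V ≃ᵃⁱ[ℝ] V) '' alcove α α₀ = alcove α α₀ := by
    intro ξ h
    nth_rewrite 1 [← h]
    simp [Set.image_image]
  have hext_inv : ∀ ξ ∈ extendedWeylGroup Φ, ξ⁻¹ ∈ extendedWeylGroup Φ := by
    intro ξ h
    rw [hΦ.ext_eq] at h ⊢
    exact inv_mem h
  refine ⟨?_, ?_⟩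
  · obtain ⟨η, hη, hηx, hA⟩ := exists_aff hΦ hα hρ h₀ hx (hext_inv ζ hζ) (hinvx ζ hζx)
    refine ⟨((η * ζ⁻¹)⁻¹, η), ⟨⟨?_, hinvA _ hA⟩, hη, ?_, hηx, by simp⟩, ?_⟩
    · refine hext_inv _ ?_
      have h1 := hΦ.aff_subset_ext hη
      have h2 := hext_inv ζ hζ
      rw [hΦ.ext_eq] at h1 h2 ⊢
      exact mul_mem h1 h2
    · refine hinvx _ ?_
      rw [AffineIsometryEquiv.coe_mul, Function.comp_apply, hinvx ζ hζx, hηx]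
    · rintro ⟨ω', η'⟩ ⟨⟨-, hA'⟩, hη', -, -, he⟩
      simp only at hA' hη' he
      -- `η' η⁻¹ = ω'⁻¹ ω` lies in `Ω ∩ W_aff`.
      have hone : η' * η⁻¹ = 1 := by
        refine aff_eq_one hΦ hα hρ h₀ ?_ ?_
        · rw [hΦ.aff_eq] at hη hη' ⊢
          exact mul_mem hη' (inv_mem hη)
        · have e : η' * η⁻¹ = ω'⁻¹ * (η * ζ⁻¹)⁻¹ := by
            rw [he]
            group
          rw [e, AffineIsometryEquiv.coe_mul, Set.image_comp, hinvA _ hA, hinvA _ hA']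
      have hηη : η' = η := mul_inv_eq_one.mp hone
      subst hηη
      simp [he]
  · intro ξ hξ hξx η hη hηx
    refine ⟨hΦ.conj_mem hξ hη, ?_⟩
    rw [AffineIsometryEquiv.coe_mul, AffineIsometryEquiv.coe_mul, Function.comp_apply,
      Function.comp_apply, hinvx ξ hξx, hηx, hξx]
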